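/- arXiv:1804.11217 — 2 statements merged into one kernel-verified Lean document; each statement's English description precedes it below -/
import Mathlib

section
/- Let Tₙ denote the letter graph of the periodic word abab⋯ab of length 2n with alphabet {a,b} and decoder {(a,b),(a,a)}. Then Tₙ contains every threshold graph on n vertices as an induced subgraph, i.e., Tₙ is an n-universal threshold graph. -/
/-- The letter graph of a word `w` over an alphabet `α` with decoder `P`:
vertices are positions `1,…,n`, and `i` is adjacent to `j > i` iff `(wᵢ, wⱼ) ∈ P`. -/
def letterGraph {n : ℕ} {α : Type*} (P : α → α → Prop) (w : Fin n → α) :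
    SimpleGraph (Fin n) where
  Adj i j := (i < j ∧ P (w i) (w j)) ∨ (j < i ∧ P (w j) (w i))
  symm := by
    refine ⟨?_⟩
    intro i j h
    rcases h with h | h
    · exact Or.inr h
    · exact Or.inl h
  loopless := by
    refine ⟨?_⟩
    intro i h
    rcases h with h | h <;> exact lt_irrefl i h.1

/-- The graph `2K₂`: two disjoint edges. -/
def twoK2 : SimpleGraph (Fin 4) := SimpleGraph.fromEdgeSet {s(0,1), s(2,3)}

/-- The chordless path `P₄`. -/
def P4 : SimpleGraph (Fin 4) := SimpleGraph.fromEdgeSet {s(0,1), s(1,2), s(2,3)}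

/-- The chordless cycle `C₄`. -/
def C4 : SimpleGraph (Fin 4) := SimpleGraph.fromEdgeSet {s(0,1), s(1,2), s(2,3), s(3,0)}

/-- The decoder `{(a,b),(a,a)}` over the alphabet `{a,b} = Fin 2` (`a = 0`, `b = 1`). -/
def thresholdDecoder : Fin 2 → Fin 2 → Prop := fun x y =>
  (x = 0 ∧ y = 1) ∨ (x = 0 ∧ y = 0)

/-- The periodic word `abab⋯ab` of length `2n`. -/
def periodicWord (n : ℕ) : Fin (2 * n) → Fin 2 := fun i =>
  if i.val % 2 = 0 then 0 else 1

lemma no_alt {V : Type} (G : SimpleGraph V)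
    (hP4 : IsEmpty (P4 ↪g G)) (hC4 : IsEmpty (C4 ↪g G))
    (h2K2 : IsEmpty (twoK2 ↪g G)) (a b c d : V) (hab : G.Adj a b) (hcd : G.Adj c d)
    (hac : ¬ G.Adj a c) (hbd : ¬ G.Adj b d) (nac : a ≠ c) (nbd : b ≠ d) : False := by
  have nab := hab.ne
  have ncd := hcd.ne
  have nad : a ≠ d := by rintro rfl; exact hbd hab.symm
  have nbc : b ≠ c := by rintro rfl; exact hac hab
  have key : ∀ (H : SimpleGraph (Fin 4)) (p q r s : V), p ≠ q → p ≠ r → p ≠ s → q ≠ r → q ≠ s →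
      r ≠ s → (H.Adj 0 1 ↔ G.Adj p q) → (H.Adj 0 2 ↔ G.Adj p r) → (H.Adj 0 3 ↔ G.Adj p s) →
      (H.Adj 1 2 ↔ G.Adj q r) → (H.Adj 1 3 ↔ G.Adj q s) → (H.Adj 2 3 ↔ G.Adj r s) →
      IsEmpty (H ↪g G) → False := by
    intro H p q r s n1 n2 n3 n4 n5 n6 h1 h2 h3 h4 h5 h6 he
    have hinj : Function.Injective ![p, q, r, s] := by
      intro i j hij
      fin_cases i <;> fin_cases j <;> simp_all
    refine he.false ⟨⟨![p, q, r, s], hinj⟩, ?_⟩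
    · intro i j
      change G.Adj (![p, q, r, s] i) (![p, q, r, s] j) ↔ H.Adj i j
      fin_cases i <;> fin_cases j <;>
        simp [h1, h2, h3, h4, h5, h6, H.adj_comm 1 0, H.adj_comm 2 0, H.adj_comm 3 0,
          H.adj_comm 2 1, H.adj_comm 3 1, H.adj_comm 3 2, G.adj_comm q p, G.adj_comm r p,
          G.adj_comm s p, G.adj_comm r q, G.adj_comm s q, G.adj_comm s r]
  have hdb : ¬ G.Adj d b := fun h => hbd h.symm
  by_cases had : G.Adj a d <;> by_cases hbc : G.Adj b c
  · refine key C4 a b c d nab nac nad nbc nbd ncd ?_ ?_ ?_ ?_ ?_ ?_ hC4 <;> simp [C4, *]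
  · refine key P4 b a d c nab.symm nbd nbc nad nac ncd.symm ?_ ?_ ?_ ?_ ?_ ?_ hP4 <;>
      simp [P4, hab.symm, hcd.symm, *]
  · refine key P4 a b c d nab nac nad nbc nbd ncd ?_ ?_ ?_ ?_ ?_ ?_ hP4 <;> simp [P4, *]
  · refine key twoK2 a b c d nab nac nad nbc nbd ncd ?_ ?_ ?_ ?_ ?_ ?_ h2K2 <;> simp [twoK2, *]

open Classical in
lemma exists_extreme {V : Type} (G : SimpleGraph V)
    (H : ∀ a b c d : V, G.Adj a b → G.Adj c d → ¬ G.Adj a c → ¬ G.Adj b d → a ≠ c → b ≠ d → False)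
    (S : Finset V) (hS : S.Nonempty) :
    ∃ v ∈ S, (∀ u ∈ S, u ≠ v → G.Adj v u) ∨ (∀ u ∈ S, u ≠ v → ¬ G.Adj v u) := by
  obtain ⟨v, hv, hmax⟩ := S.exists_max_image (fun v => (S.filter (G.Adj v)).card) hS
  by_cases hd : ∀ u ∈ S, u ≠ v → G.Adj v u
  · exact ⟨v, hv, Or.inl hd⟩
  push Not at hd
  obtain ⟨u, hu, huv, hnuv⟩ := hd
  by_cases hi : ∀ w ∈ S, w ≠ u → ¬ G.Adj u w
  · exact ⟨u, hu, Or.inr hi⟩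
  push Not at hi
  obtain ⟨w, hw, hwu, huw⟩ := hi
  exfalso
  have hvw : v ≠ w := by rintro rfl; exact hnuv huw.symm
  have hle := hmax w hw
  have hcard : ((S.filter (G.Adj w)).erase v).card ≤ ((S.filter (G.Adj v)).erase w).card := by
    by_cases h : G.Adj v w
    · rw [Finset.card_erase_of_mem (by simp [hv, h.symm]),
        Finset.card_erase_of_mem (by simp [hw, h])]
      exact Nat.sub_le_sub_right hle 1
    · rw [Finset.erase_eq_of_notMem (by simp [G.adj_comm w v, h]),
        Finset.erase_eq_of_notMem (by simp [h])]
      exact hle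
  have hex : ∃ x ∈ (S.filter (G.Adj v)).erase w, x ∉ (S.filter (G.Adj w)).erase v := by
    by_contra hcon
    push Not at hcon
    have heq := Finset.eq_of_subset_of_card_le (fun x hx => hcon x hx) hcard
    have : u ∈ (S.filter (G.Adj w)).erase v := by simp [hu, huv, huw.symm]
    rw [← heq] at this
    simp [hnuv] at this
  obtain ⟨x, hx, hx'⟩ := hex
  simp only [Finset.mem_erase, Finset.mem_filter] at hx hx'
  obtain ⟨hxw, hxS, hvx⟩ := hx
  exact H x v w u hvx.symm huw.symm (fun h => hx' ⟨hvx.ne', hxS, h.symm⟩) hnuv hxw huv.symm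

open Classical in
lemma exists_code {V : Type} (G : SimpleGraph V)
    (H : ∀ a b c d : V, G.Adj a b → G.Adj c d → ¬ G.Adj a c → ¬ G.Adj b d → a ≠ c → b ≠ d → False)
    (m : ℕ) : ∀ S : Finset V, S.card = m → ∃ f : V → ℕ, (∀ x ∈ S, f x < 2 * m) ∧
      (∀ x ∈ S, ∀ y ∈ S, x ≠ y → f x ≠ f y) ∧
      (∀ x ∈ S, ∀ y ∈ S, f x < f y → (G.Adj x y ↔ f x % 2 = 0)) := by
  induction m with
  | zero =>
    intro S hS
    rw [Finset.card_eq_zero] at hS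
    subst hS
    exact ⟨fun _ => 0, by simp⟩
  | succ m ih =>
    intro S hS
    obtain ⟨v, hv, h⟩ := exists_extreme G H S (Finset.card_pos.mp (by omega))
    obtain ⟨f, h1, h2, h3⟩ := ih (S.erase v) (by rw [Finset.card_erase_of_mem hv]; omega)
    have main : ∀ k : ℕ, k < 2 → (∀ u ∈ S, u ≠ v → (G.Adj v u ↔ k % 2 = 0)) →
        ∃ f : V → ℕ, (∀ x ∈ S, f x < 2 * (m + 1)) ∧
          (∀ x ∈ S, ∀ y ∈ S, x ≠ y → f x ≠ f y) ∧
          (∀ x ∈ S, ∀ y ∈ S, f x < f y → (G.Adj x y ↔ f x % 2 = 0)) := by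
      intro k hk hadj
      refine ⟨fun x => if x = v then k else f x + 2, ?_, ?_, ?_⟩
      · intro x hx
        have := h1 x
        by_cases hxv : x = v
        · simp only [hxv, if_true]; omega
        · have := this (Finset.mem_erase.mpr ⟨hxv, hx⟩)
          simp only [hxv, if_false]; omega
      · intro x hx y hy hxy
        by_cases hxv : x = v <;> by_cases hyv : y = v
        · exact absurd (hxv.trans hyv.symm) hxy
        · simp only [hxv, hyv, if_true, if_false]; omega
        · simp only [hxv, hyv, if_true, if_false]; omega
        · have := h2 x (Finset.mem_erase.mpr ⟨hxv, hx⟩) y (Finset.mem_erase.mpr ⟨hyv, hy⟩) hxy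
          simp only [hxv, hyv, if_false]; omega
      · intro x hx y hy hxy
        by_cases hxv : x = v <;> by_cases hyv : y = v
        · simp [hxv, hyv] at hxy
        · simp only [hxv, if_true]; exact hadj y hy hyv
        · simp only [hxv, hyv, if_true, if_false] at hxy; omega
        · simp only [hxv, hyv, if_false] at hxy ⊢
          rw [h3 x (Finset.mem_erase.mpr ⟨hxv, hx⟩) y (Finset.mem_erase.mpr ⟨hyv, hy⟩) (by omega)]
          omega
    rcases h with h | h
    · exact main 0 (by omega) (fun u hu huv => by simp [h u hu huv])
    · exact main 1 (by omega) (fun u hu huv => by simp [h u hu huv])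

/-- `Tₙ`, the letter graph of `abab⋯ab` (length `2n`) with decoder `{(a,b),(a,a)}`,
contains every threshold graph (i.e. `(P₄, C₄, 2K₂)`-free graph) on `n` vertices as an
induced subgraph: it is an `n`-universal threshold graph. -/
theorem threshold_universal {V : Type} [Fintype V] (n : ℕ) (G : SimpleGraph V)
    (hcard : Fintype.card V = n)
    (hP4 : IsEmpty (P4 ↪g G)) (hC4 : IsEmpty (C4 ↪g G))
    (h2K2 : IsEmpty (twoK2 ↪g G)) :
    Nonempty (G ↪g letterGraph thresholdDecoder (periodicWord n)) := by
  obtain ⟨f, h1, h2, h3⟩ := exists_code G (no_alt G hP4 hC4 h2K2) n Finset.univ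
    (by rw [Finset.card_univ, hcard])
  simp only [Finset.mem_univ, true_imp_iff, forall_true_left] at h1 h2 h3
  have hdec : ∀ i j : Fin (2 * n),
      thresholdDecoder (periodicWord n i) (periodicWord n j) ↔ i.val % 2 = 0 := by
    intro i j
    unfold thresholdDecoder periodicWord
    split_ifs <;> simp_all
  have hinj : Function.Injective (fun x => (⟨f x, h1 x⟩ : Fin (2 * n))) := by
    intro x y hxy
    by_contra hne
    exact h2 x y hne (by simpa using hxy)
  refine ⟨⟨⟨fun x => ⟨f x, h1 x⟩, hinj⟩, ?_⟩⟩
  · intro x y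
    change ((f x < f y ∧ thresholdDecoder (periodicWord n ⟨f x, h1 x⟩) (periodicWord n ⟨f y, h1 y⟩)) ∨
      (f y < f x ∧ thresholdDecoder (periodicWord n ⟨f y, h1 y⟩) (periodicWord n ⟨f x, h1 x⟩))) ↔ _
    simp only [hdec]
    by_cases hxy : x = y
    · subst hxy; simp
    · rcases lt_or_gt_of_ne (h2 x y hxy) with h | h
      · rw [h3 x y h]; simp [h, h.not_gt]
      · rw [G.adj_comm, h3 y x h]; simp [h, h.not_gt]
end

section
/- Let G be a graph with distinct vertices u and v such that N(v) = N(u) (v is a non-adjacent twin of u). If the graph G − v obtained by deleting v is a letter graph over an alphabet Σ with a decoder P such that the letter a assigned to u satisfies (a,a) ∉ P, then G is also a letter graph over Σ with decoder P: inserting a copy of the letter of u immediately next to it in a word representing G − v yields a word representing G. In particular, if G − v is a 3-letter graph with the decoder {(a,b),(b,c),(c,a)}, then so is G. -/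
/-- The cyclic decoder `{(a,b),(b,c),(c,a)}` over the alphabet `{a,b,c} = Fin 3`
(`a = 0`, `b = 1`, `c = 2`). -/
def cyclicDecoder : Fin 3 → Fin 3 → Prop := fun x y =>
  (x = 0 ∧ y = 1) ∨ (x = 1 ∧ y = 2) ∨ (x = 2 ∧ y = 0)

/-- `G` is a 3-letter graph with the decoder `{(a,b),(b,c),(c,a)}`. -/
def IsCyclic3Letter {V : Type} (G : SimpleGraph V) : Prop :=
  ∃ (n : ℕ) (w : Fin n → Fin 3), Nonempty (G ≃g letterGraph cyclicDecoder w)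

theorem ti_key {n : ℕ} {α : Type*} (P : α → α → Prop) (w : Fin n → α) (i j : Fin n)
    (h : ¬ P (w i) (w i)) :
    (letterGraph P (Fin.insertNth (α := fun _ => α) i.succ (w i) w)).Adj i.succ
      (i.succ.succAbove j) ↔ (letterGraph P w).Adj i j := by
  have h1 : i.succ < i.succ.succAbove j ↔ i < j := by
    rw [Fin.lt_succAbove_iff_le_castSucc]
    simp only [Fin.le_def, Fin.lt_def, Fin.val_succ, Fin.val_castSucc]; omega
  have h2 : i.succ.succAbove j < i.succ ↔ j ≤ i := by
    rw [Fin.succAbove_lt_iff_castSucc_lt]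
    simp only [Fin.le_def, Fin.lt_def, Fin.val_succ, Fin.val_castSucc]; omega
  simp only [letterGraph, Fin.insertNth_apply_same, Fin.insertNth_apply_succAbove, h1, h2]
  rw [le_iff_lt_or_eq]
  constructor
  · rintro (h' | ⟨h' | rfl, h''⟩)
    · exact Or.inl h'
    · exact Or.inr ⟨h', h''⟩
    · exact absurd h'' h
  · rintro (h' | h')
    · exact Or.inl h'
    · exact Or.inr ⟨Or.inl h'.1, h'.2⟩

theorem ti_main {V : Type} (G : SimpleGraph V) (u v : V)
    (huv : u ≠ v) (htwin : G.neighborSet v = G.neighborSet u)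
    (α : Type) (P : α → α → Prop) (n : ℕ) (w : Fin n → α)
    (e : (G.induce {x : V | x ≠ v}) ≃g letterGraph P w)
    (h : ¬ P (w (e ⟨u, huv⟩)) (w (e ⟨u, huv⟩))) :
    Nonempty (G ≃g
        letterGraph P (Fin.insertNth (e ⟨u, huv⟩).succ (w (e ⟨u, huv⟩)) w)) := by
  classical
  have htw : ∀ y, G.Adj v y ↔ G.Adj u y := fun y => by
    rw [← SimpleGraph.mem_neighborSet, htwin, SimpleGraph.mem_neighborSet]
  have he : ∀ x y, (letterGraph P w).Adj (e x) (e y) ↔ G.Adj x.1 y.1 := fun x y => by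
    rw [e.map_rel_iff]; rfl
  let f : V → Fin (n+1) := fun x =>
    if hx : x = v then (e ⟨u, huv⟩).succ else (e ⟨u, huv⟩).succ.succAbove (e ⟨x, hx⟩)
  have fv : f v = (e ⟨u, huv⟩).succ := by simp [f]
  have fn : ∀ x (hx : x ≠ v), f x = (e ⟨u, huv⟩).succ.succAbove (e ⟨x, hx⟩) := by
    intro x hx; simp [f, hx]
  have hf : Function.Bijective f := by
    constructor
    · intro x y hxy
      by_cases hx : x = v <;> by_cases hy : y = v
      · rw [hx, hy]
      · subst hx; rw [fv, fn y hy] at hxy; exact absurd hxy.symm (Fin.succAbove_ne _ _)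
      · subst hy; rw [fv, fn x hx] at hxy; exact absurd hxy (Fin.succAbove_ne _ _)
      · rw [fn x hx, fn y hy] at hxy
        have := e.injective (Fin.succAbove_right_injective hxy)
        exact congrArg Subtype.val this
    · intro k
      by_cases hk : k = (e ⟨u, huv⟩).succ
      · exact ⟨v, by rw [fv, hk]⟩
      · obtain ⟨j, hj⟩ := Fin.exists_succAbove_eq hk
        refine ⟨(e.symm j).1, ?_⟩
        rw [fn _ (e.symm j).2, ← hj]
        congr 1
        exact e.apply_symm_apply j
  refine ⟨⟨Equiv.ofBijective f hf, ?_⟩⟩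
  intro x y
  simp only [Equiv.ofBijective_apply]
  by_cases hx : x = v <;> by_cases hy : y = v
  · subst hx; subst hy; simp
  · subst hx
    rw [fv, fn y hy, ti_key P w _ _ h, he, htw]
  · subst hy
    rw [fv, fn x hx, SimpleGraph.adj_comm, ti_key P w _ _ h, he, G.adj_comm x, htw]
  · rw [fn x hx, fn y hy, ← he ⟨x, hx⟩ ⟨y, hy⟩]
    simp only [letterGraph, Fin.insertNth_apply_succAbove, Fin.succAbove_lt_succAbove_iff]

/-- Twin insertion: if `v` is a twin of `u` (`N(v) = N(u)`, so `u,v` non-adjacent) and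
`G - v` is represented as a letter graph over a decoder `P` in which the letter `a` of
`u` satisfies `(a,a) ∉ P`, then inserting a copy of the letter of `u` immediately after
it yields a word representing `G`; in particular, if `G - v` is a 3-letter graph with
the decoder `{(a,b),(b,c),(c,a)}`, then so is `G`. -/
theorem twin_insertion {V : Type} [Fintype V] (G : SimpleGraph V) (u v : V)
    (huv : u ≠ v) (htwin : G.neighborSet v = G.neighborSet u) :
    (∀ (α : Type) (P : α → α → Prop) (n : ℕ) (w : Fin n → α)
        (e : (G.induce {x : V | x ≠ v}) ≃g letterGraph P w),
      ¬ P (w (e ⟨u, huv⟩)) (w (e ⟨u, huv⟩)) →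
      Nonempty (G ≃g
        letterGraph P (Fin.insertNth (e ⟨u, huv⟩).succ (w (e ⟨u, huv⟩)) w))) ∧
    (IsCyclic3Letter (G.induce {x : V | x ≠ v}) → IsCyclic3Letter G) := by
  refine ⟨ti_main G u v huv htwin, ?_⟩
  rintro ⟨n, w, ⟨e⟩⟩
  refine ⟨_, _, ti_main G u v huv htwin _ _ n w e ?_⟩
  generalize w (e ⟨u, huv⟩) = a
  unfold cyclicDecoder
  revert a
  decide
end
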